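/- For all integers m, n ≥ 0 and every z ∈ ℂ, ∫_{ℝ²} A(z,x)·A(conj(z),y)·ψ_m(x)·ψ_n(y) dx dy = z^m · conj(z)^n / √(m!·n!), where A is the Segal–Bargmann kernel and ψ_m, ψ_n are the normalized Hermite functions. -/

import Mathlib

open Complex ComplexConjugate MeasureTheory

/-- The Segal–Bargmann kernel
`A(z,x) = π^{−1/4} · exp(−(z² + x²)/2 + √2·z·x)` for `z ∈ ℂ`, `x ∈ ℝ`. -/
noncomputable def segalBargmannKernel (z : ℂ) (x : ℝ) : ℂ :=
  (Real.pi ^ (-(1 / 4 : ℝ)) : ℝ) *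
    Complex.exp (-(z ^ 2 + (x : ℂ) ^ 2) / 2 + (Real.sqrt 2 : ℂ) * z * x)

/-- The `n`-th physicists' Hermite polynomial
`H_n(x) = (−1)^n e^{x²} (d/dx)^n e^{−x²}`. -/
noncomputable def hermitePoly (n : ℕ) (x : ℝ) : ℝ :=
  (-1 : ℝ) ^ n * Real.exp (x ^ 2) * iteratedDeriv n (fun t => Real.exp (-t ^ 2)) x

/-- The `n`-th normalized Hermite function
`ψ_n(x) = (2^n·n!·√π)^{−1/2} · H_n(x) · exp(−x²/2)`. -/
noncomputable def hermiteFun (n : ℕ) (x : ℝ) : ℝ :=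
  (Real.sqrt (2 ^ n * n.factorial * Real.sqrt Real.pi))⁻¹ * hermitePoly n x *
    Real.exp (-x ^ 2 / 2)

/-!
The substance is one-dimensional: the Segal–Bargmann transform sends `ψ_n` to `z ^ n / √n!`.
By Rodrigues' formula `ψ_n` is, up to a constant, `exp (x² / 2)` times the `n`-th derivative of
`exp (-x²)`, and multiplying the kernel by `exp (x² / 2)` leaves a multiple of the pure exponential
`exp (√2 z x)`. Integrating by parts `n` times against this exponential gives the factor
`(-√2 z) ^ n` times a Gaussian integral, whose value `√π exp (z² / 2)` cancels the factor
`exp (-z² / 2)` of the kernel. Fubini's theorem then gives the double integral.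
-/

open Polynomial

theorem iteratedDeriv_continuousLinearMap_comp {𝕜 F G : Type*} [NontriviallyNormedField 𝕜]
    [NormedAddCommGroup F] [NormedSpace 𝕜 F] [NormedAddCommGroup G] [NormedSpace 𝕜 G]
    (L : F →L[𝕜] G) {f : 𝕜 → F} {n : ℕ} {x : 𝕜} (hf : ContDiffAt 𝕜 n f x) :
    iteratedDeriv n (fun t => L (f t)) x = L (iteratedDeriv n f x) := by
  simp only [iteratedDeriv_eq_iteratedFDeriv]
  exact congrArg (· fun _ => 1) (L.iteratedFDeriv_comp_left hf le_rfl)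

theorem exists_iteratedDeriv_cexp_eval (q : ℂ[X]) (n : ℕ) :
    ∃ p : ℂ[X], iteratedDeriv n (fun t : ℝ => cexp (q.eval (t : ℂ))) =
      fun t : ℝ => p.eval (t : ℂ) * cexp (q.eval (t : ℂ)) := by
  induction n with
  | zero => exact ⟨1, by simp⟩
  | succ n ih =>
    obtain ⟨p, hp⟩ := ih
    refine ⟨derivative p + p * derivative q, ?_⟩
    funext t
    have hderiv := ((p.hasDerivAt (t : ℂ)).fun_mul (q.hasDerivAt (t : ℂ)).cexp).comp_ofReal
    rw [iteratedDeriv_succ, hp, hderiv.deriv, eval_add, eval_mul]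
    ring

theorem integral_cexp_smul_iteratedDeriv {E : Type*} [NormedAddCommGroup E] [NormedSpace ℂ E]
    (a : ℂ) {f : ℝ → E} {n : ℕ} (hf : ContDiff ℝ n f)
    (hint : ∀ k ≤ n, Integrable fun x : ℝ => cexp (a * x) • iteratedDeriv k f x) :
    ∫ x : ℝ, cexp (a * x) • iteratedDeriv n f x = (-a) ^ n • ∫ x : ℝ, cexp (a * x) • f x := by
  induction n with
  | zero => simp
  | succ n ih =>
    have hexp (x : ℝ) : HasDerivAt (fun x : ℝ => cexp (a * x)) (a * cexp (a * x)) x := by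
      simpa [mul_comm] using ((hasDerivAt_id x).ofReal_comp.const_mul a).cexp
    have hiter (x : ℝ) : HasDerivAt (iteratedDeriv n f) (iteratedDeriv (n + 1) f x) x := by
      rw [iteratedDeriv_succ]
      exact (hf.differentiable_iteratedDeriv n (mod_cast n.lt_succ_self) x).hasDerivAt
    calc ∫ x : ℝ, cexp (a * x) • iteratedDeriv (n + 1) f x
        = -∫ x : ℝ, (a * cexp (a * x)) • iteratedDeriv n f x :=
          integral_bilinear_hasDerivAt_right_eq_neg_left_of_integrable
            (L := ContinuousLinearMap.lsmul ℝ ℂ) (fun x _ => hexp x) (fun x _ => hiter x)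
            (hint (n + 1) le_rfl)
            (by simpa [mul_smul] using! (hint n n.le_succ).smul a)
            (hint n n.le_succ)
      _ = (-a) • ∫ x : ℝ, cexp (a * x) • iteratedDeriv n f x := by
          simp only [mul_smul, integral_smul, neg_smul]
      _ = (-a) ^ (n + 1) • ∫ x : ℝ, cexp (a * x) • f x := by
          rw [ih (hf.of_le (mod_cast n.le_succ)) fun k hk => hint k (hk.trans n.le_succ), smul_smul,
            pow_succ']

section Gaussian

variable {b : ℂ}

theorem integrable_pow_mul_cexp_quadratic (hb : b.re < 0) (c d : ℂ) (k : ℕ) :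
    Integrable fun x : ℝ => (x : ℂ) ^ k * cexp (b * x ^ 2 + c * x + d) := by
  -- The growth of `x ^ k` is absorbed by shifting the linear coefficient `c` by `±1`.
  have hdom := ((integrable_cexp_quadratic' hb (c + 1) d).norm.add
    (integrable_cexp_quadratic' hb (c - 1) d).norm).const_mul (k.factorial : ℝ)
  refine hdom.mono' (by fun_prop) (.of_forall fun x => ?_)
  have hpow : |x| ^ k ≤ k.factorial * (Real.exp x + Real.exp (-x)) := by
    have h := Real.pow_div_factorial_le_exp |x| (abs_nonneg x) k
    rw [div_le_iff₀' (by positivity)] at h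
    exact h.trans (by gcongr; exact Real.exp_abs_le x)
  calc ‖(x : ℂ) ^ k * cexp (b * x ^ 2 + c * x + d)‖
      = |x| ^ k * ‖cexp (b * x ^ 2 + c * x + d)‖ := by simp
    _ ≤ k.factorial * (Real.exp x + Real.exp (-x)) * ‖cexp (b * x ^ 2 + c * x + d)‖ := by gcongr
    _ = k.factorial * (‖cexp x * cexp (b * x ^ 2 + c * x + d)‖ +
          ‖cexp (-x) * cexp (b * x ^ 2 + c * x + d)‖) := by
        simp only [norm_mul, ← ofReal_neg, norm_exp_ofReal]
        ring
    _ = k.factorial * (‖cexp (b * x ^ 2 + (c + 1) * x + d)‖ +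
          ‖cexp (b * x ^ 2 + (c - 1) * x + d)‖) := by
        rw [← Complex.exp_add, ← Complex.exp_add]
        ring_nf

theorem integrable_eval_mul_cexp_quadratic (hb : b.re < 0) (c d : ℂ) (p : ℂ[X]) :
    Integrable fun x : ℝ => p.eval (x : ℂ) * cexp (b * x ^ 2 + c * x + d) := by
  simp only [eval_eq_sum_range, Finset.sum_mul, mul_assoc]
  exact integrable_finsetSum _ fun k _ =>
    (integrable_pow_mul_cexp_quadratic hb c d k).const_mul (p.coeff k)

theorem integrable_cexp_mul_iteratedDeriv_cexp_quadratic (hb : b.re < 0) (a c d : ℂ) (n : ℕ) :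
    Integrable fun x : ℝ =>
      cexp (a * x) * iteratedDeriv n (fun t : ℝ => cexp (b * t ^ 2 + c * t + d)) x := by
  obtain ⟨p, hp⟩ := exists_iteratedDeriv_cexp_eval (C b * X ^ 2 + C c * X + C d) n
  simp only [eval_add, eval_mul, eval_C, eval_pow, eval_X] at hp
  refine (integrable_eval_mul_cexp_quadratic hb (a + c) d p).congr (.of_forall fun x => ?_)
  simp only [hp]
  rw [mul_left_comm, ← Complex.exp_add]
  ring_nf

theorem integral_cexp_mul_iteratedDeriv_cexp_quadratic (hb : b.re < 0) (a c d : ℂ) (n : ℕ) :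
    ∫ x : ℝ, cexp (a * x) * iteratedDeriv n (fun t : ℝ => cexp (b * t ^ 2 + c * t + d)) x =
      (-a) ^ n * ((Real.pi / -b) ^ (1 / 2 : ℂ) * cexp (d - (a + c) ^ 2 / (4 * b))) := by
  have hsmooth : ContDiff ℝ n fun t : ℝ => cexp (b * t ^ 2 + c * t + d) := by
    have hcast : ContDiff ℝ n ((↑) : ℝ → ℂ) := ofRealCLM.contDiff
    fun_prop
  have hparts := integral_cexp_smul_iteratedDeriv a hsmooth fun k _ =>
    integrable_cexp_mul_iteratedDeriv_cexp_quadratic hb a c d k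
  simp only [smul_eq_mul] at hparts
  rw [hparts, ← integral_cexp_quadratic hb]
  congr 2 with x
  rw [← Complex.exp_add]
  ring_nf

theorem integral_cexp_mul_iteratedDeriv_cexp_neg_sq (a : ℂ) (n : ℕ) :
    ∫ x : ℝ, cexp (a * x) * iteratedDeriv n (fun t : ℝ => cexp (-t ^ 2)) x =
      (-a) ^ n * (√Real.pi * cexp (a ^ 2 / 4)) := by
  have hsqrt : (Real.pi : ℂ) ^ (2⁻¹ : ℂ) = √Real.pi := by
    rw [Real.sqrt_eq_rpow, ofReal_cpow Real.pi_pos.le]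
    norm_num
  simpa [hsqrt, div_neg] using
    integral_cexp_mul_iteratedDeriv_cexp_quadratic (b := -1) (by simp) a 0 0 n

end Gaussian

/-- The Segal–Bargmann transform `f ↦ ∫ A(·, x) f(x) dx`. As usual for the Bochner integral, its
value at `z` is `0` when the integrand is not integrable. -/
noncomputable def segalBargmannTransform (f : ℝ → ℂ) (z : ℂ) : ℂ :=
  ∫ x : ℝ, segalBargmannKernel z x * f x

theorem segalBargmannTransform_const_mul (c : ℂ) (f : ℝ → ℂ) (z : ℂ) :
    segalBargmannTransform (fun x => c * f x) z = c * segalBargmannTransform f z := by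
  simp only [segalBargmannTransform, mul_left_comm _ c, integral_const_mul]

theorem integral_segalBargmannKernel_mul_segalBargmannKernel (f g : ℝ → ℂ) (z w : ℂ) :
    ∫ p : ℝ × ℝ, segalBargmannKernel z p.1 * segalBargmannKernel w p.2 * f p.1 * g p.2 =
      segalBargmannTransform f z * segalBargmannTransform g w := by
  rw [segalBargmannTransform, segalBargmannTransform, Measure.volume_eq_prod, ← integral_prod_mul]
  congr 1 with p
  ring

theorem segalBargmannKernel_mul_cexp_sq_div_two (z : ℂ) (x : ℝ) :
    segalBargmannKernel z x * cexp (x ^ 2 / 2) =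
      (Real.pi ^ (-(1 / 4) : ℝ) : ℝ) * cexp (-z ^ 2 / 2) * cexp (√2 * z * x) := by
  rw [segalBargmannKernel, mul_assoc, mul_assoc _ (cexp _), ← Complex.exp_add, ← Complex.exp_add]
  congr 2
  ring

theorem segalBargmannTransform_cexp_sq_div_two_mul (f : ℝ → ℂ) (z : ℂ) :
    segalBargmannTransform (fun x => cexp (x ^ 2 / 2) * f x) z =
      (Real.pi ^ (-(1 / 4) : ℝ) : ℝ) * cexp (-z ^ 2 / 2) * ∫ x : ℝ, cexp (√2 * z * x) * f x := by
  simp only [segalBargmannTransform, ← mul_assoc, segalBargmannKernel_mul_cexp_sq_div_two]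
  simp only [mul_assoc, integral_const_mul]

theorem ofReal_hermiteFun (n : ℕ) (x : ℝ) :
    (hermiteFun n x : ℂ) = ((√(2 ^ n * n.factorial * √Real.pi))⁻¹ : ℝ) * (-1) ^ n *
      (cexp (x ^ 2 / 2) * iteratedDeriv n (fun t : ℝ => cexp (-t ^ 2)) x) := by
  have hderiv : iteratedDeriv n (fun t : ℝ => cexp (-t ^ 2)) x =
      (iteratedDeriv n (fun t : ℝ => Real.exp (-t ^ 2)) x : ℝ) := by
    rw [← ofRealCLM_apply, ← iteratedDeriv_continuousLinearMap_comp ofRealCLM (by fun_prop)]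
    simp only [ofRealCLM_apply, ofReal_exp, ofReal_neg, ofReal_pow]
  have hexp : cexp (x ^ 2) * cexp (-x ^ 2 / 2) = cexp (x ^ 2 / 2) := by
    rw [← Complex.exp_add]
    ring_nf
  rw [hderiv, ← hexp, hermiteFun, hermitePoly]
  push_cast
  ring

theorem hermiteFun_normalization (n : ℕ) :
    Real.pi ^ (-(1 / 4) : ℝ) * √Real.pi * √2 ^ n * (√(2 ^ n * n.factorial * √Real.pi))⁻¹ =
      (√n.factorial)⁻¹ := by
  have hpi : Real.pi ^ (-(1 / 4) : ℝ) * √Real.pi = √√Real.pi := by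
    simp only [Real.sqrt_eq_rpow, ← Real.rpow_mul Real.pi_pos.le, ← Real.rpow_add Real.pi_pos]
    norm_num
  have hpow : √(2 ^ n) = √2 ^ n := by
    rw [Real.sqrt_eq_iff_eq_sq (by positivity) (by positivity), pow_right_comm,
      Real.sq_sqrt zero_le_two]
  rw [hpi, Real.sqrt_mul (by positivity), Real.sqrt_mul (by positivity), hpow]
  field_simp

theorem segalBargmannTransform_hermiteFun (n : ℕ) (z : ℂ) :
    segalBargmannTransform (fun x => hermiteFun n x) z = z ^ n / √n.factorial := by
  have hexp : cexp (-z ^ 2 / 2) * cexp ((√2 * z) ^ 2 / 4) = 1 := by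
    have hsqrt : (√2 : ℂ) ^ 2 = 2 := by rw [← ofReal_pow, Real.sq_sqrt zero_le_two, ofReal_ofNat]
    rw [← Complex.exp_add, mul_pow, hsqrt, ← Complex.exp_zero]
    ring_nf
  have hsign : (-1) ^ n * (-(√2 * z)) ^ n = (√2 : ℂ) ^ n * z ^ n := by
    rw [← mul_pow, neg_one_mul, neg_neg, mul_pow]
  simp only [ofReal_hermiteFun, segalBargmannTransform_const_mul,
    segalBargmannTransform_cexp_sq_div_two_mul, integral_cexp_mul_iteratedDeriv_cexp_neg_sq]
  set N : ℝ := (√(2 ^ n * n.factorial * √Real.pi))⁻¹ with hN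
  set P : ℝ := Real.pi ^ (-(1 / 4) : ℝ) with hP
  calc (N : ℂ) * (-1) ^ n *
        (P * cexp (-z ^ 2 / 2) * ((-(√2 * z)) ^ n * (√Real.pi * cexp ((√2 * z) ^ 2 / 4))))
      = P * √Real.pi * N * ((-1) ^ n * (-(√2 * z)) ^ n) *
          (cexp (-z ^ 2 / 2) * cexp ((√2 * z) ^ 2 / 4)) := by ring
    _ = ((P * √Real.pi * √2 ^ n * N : ℝ) : ℂ) * z ^ n := by
        rw [hsign, hexp]
        push_cast
        ring
    _ = z ^ n / √n.factorial := by
        rw [hP, hN, hermiteFun_normalization, ofReal_inv, inv_mul_eq_div]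

theorem integral_segalBargmann_hermite_general (m n : ℕ) (z w : ℂ) :
    ∫ p : ℝ × ℝ,
        segalBargmannKernel z p.1 * segalBargmannKernel w p.2 *
          (hermiteFun m p.1 : ℂ) * (hermiteFun n p.2 : ℂ)
      = z ^ m * w ^ n / (√(m.factorial * n.factorial) : ℂ) := by
  rw [integral_segalBargmannKernel_mul_segalBargmannKernel (fun x => hermiteFun m x)
    (fun x => hermiteFun n x), segalBargmannTransform_hermiteFun, segalBargmannTransform_hermiteFun,
    div_mul_div_comm, Real.sqrt_mul (Nat.cast_nonneg _), ofReal_mul]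

/-- For all integers `m, n ≥ 0` and `z ∈ ℂ`,
`∫_{ℝ²} A(z,x)·A(conj z,y)·ψ_m(x)·ψ_n(y) dx dy = z^m · conj z^n / √(m!·n!)`. -/
theorem integral_segalBargmann_hermite (m n : ℕ) (z : ℂ) :
    ∫ p : ℝ × ℝ,
        segalBargmannKernel z p.1 * segalBargmannKernel (conj z) p.2 *
          (hermiteFun m p.1 : ℂ) * (hermiteFun n p.2 : ℂ)
      = z ^ m * conj z ^ n /
          (Real.sqrt ((m.factorial : ℝ) * (n.factorial : ℝ)) : ℂ) :=
  integral_segalBargmann_hermite_general m n z (conj z)
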